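/- Let P ⊆ ℝ³ be a simple convex polytope (the convex hull of finitely many points, full-dimensional, such that every vertex lies on exactly 3 edges) with exactly 20 vertices. Then some edge of P has dihedral angle at most π − arctan(2), the dihedral angle of the regular dodecahedron. -/

import Mathlib

/-!
The normal cones of the 20 vertices cover space, so the normal cone at some vertex `v` contains at
least `1 / 20` of the unit ball (`exists_large_normal_cone`). As `v` is simple, its three edges have
linearly independent directions and `P` lies in the cone with apex `v` that they generate
(`exists_three_edges`); hence the normal cone at `v` lies in the polar cone of the three directions.
By Girard's formula (`cone_le`) the polar cone occupies at most the fraction `(2π - σ) / 4π` of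
the ball, where `σ` is the sum of the three face angles at `v`. Therefore `σ ≤ 9π / 5`.

Suppose that the three dihedral angles at `v` all exceed `π - arctan 2 = arccos (-1 / √5)`. They
are at most the dihedral angles of the tangent cone (`dihedralAngle3_le`), so the sides of the polar
spherical triangle are all shorter than `arccos (1 / √5)`, the edge of the spherical icosahedron. A
triangle with such sides has smaller area than a face of the spherical icosahedron, i.e. less
than `1 / 20` of the sphere. Its angle sum is then below `6π / 5` (`angle_sum_lt`), which
means `σ > 9π / 5` (`arccos_sum_gt`), a contradiction. The area comparison is the polynomial
inequality `gram_lt`, obtained from Euler's formula `tan (E / 2) = D / (1 + x + y + z)` for the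
spherical excess `E` of a triangle with side cosines `x, y, z` and Gram determinant `D ^ 2`.
-/

open MeasureTheory
open scoped ENNReal RealInnerProductSpace

/-- A face of a convex set: a closed convex extreme subset. -/
def IsFaceOf3 (P F : Set (EuclideanSpace ℝ (Fin 3))) : Prop :=
  IsExtreme ℝ P F ∧ Convex ℝ F ∧ IsClosed F

/-- An edge: a 1-dimensional face. -/
def IsEdgeOf3 (P F : Set (EuclideanSpace ℝ (Fin 3))) : Prop :=
  IsFaceOf3 P F ∧ Module.finrank ℝ (affineSpan ℝ F).direction = 1

/-- A 3-polytope is simple if every vertex (extreme point) lies on exactly 3 edges. -/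
def IsSimple3 (P : Set (EuclideanSpace ℝ (Fin 3))) : Prop :=
  ∀ v ∈ Set.extremePoints ℝ P, {F | IsEdgeOf3 P F ∧ v ∈ F}.ncard = 3

/-- The dihedral angle of `P` at the edge with endpoints `a`, `b`: the arc length of the
set of unit vectors orthogonal to `b - a` pointing from the edge midpoint into `P`. -/
noncomputable def dihedralAngle3 (P : Set (EuclideanSpace ℝ (Fin 3)))
    (a b : EuclideanSpace ℝ (Fin 3)) : ℝ≥0∞ :=
  μH[1] {u : EuclideanSpace ℝ (Fin 3) |
    ‖u‖ = 1 ∧ ⟪u, b - a⟫ = 0 ∧ ∃ t > (0 : ℝ), midpoint ℝ a b + t • u ∈ P}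

/-- Euclidean three-space. -/
abbrev E3 := EuclideanSpace ℝ (Fin 3)

/-! ### Spherical triangles with short sides -/

/-- For numbers `x ≤ y ≤ z`, the ratio of the Gram determinant to `(1 + x + y + z) ^ 2` is at most
its value at `(x, x, x)`; it is compared first with `(x, y, y)` and then with `(x, x, x)`. For the
spherical triangle whose side cosines are `x, y, z`, this ratio is `tan (E / 2) ^ 2`, with `E` the
spherical excess, so lengthening the two shorter sides to the longest one increases the area. -/
lemma gram_le_equilateral {x y z : ℝ} (hx : 0 ≤ x) (hxy : x ≤ y) (hyz : y ≤ z) (hx1 : x ≤ 1) :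
    (1 + 2*x*y*z - x^2 - y^2 - z^2) * (1 + 3*x)^2 ≤ (1-x)^2 * (1+2*x) * (1+x+y+z)^2 := by
  have hy : 0 ≤ y := hx.trans hxy
  have h1x : 0 ≤ 1 - x := by linarith
  have h1 : (1 + 2*x*y*z - x^2 - y^2 - z^2) * (1+x+2*y)^2
      ≤ (1 + 2*x*y*y - x^2 - y^2 - y^2) * (1+x+y+z)^2 := by
    obtain ⟨w, hw, rfl⟩ : ∃ w, 0 ≤ w ∧ z = y + w := ⟨z - y, by linarith, by ring⟩
    rw [← sub_nonneg]
    have : 0 ≤ w * (2*(1+x+2*y)*(1-x)*(1+x)*(1+y) + 2*w*(1+x)*(1+y)^2) := by positivity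
    linarith
  have h2 : (1 + 2*x*y*y - x^2 - y^2 - y^2) * (1 + 3*x)^2
      ≤ (1-x)^2 * (1+2*x) * (1+x+2*y)^2 := by
    obtain ⟨w, hw, rfl⟩ : ∃ w, 0 ≤ w ∧ y = x + w := ⟨y - x, by linarith, by ring⟩
    rw [← sub_nonneg]
    have : 0 ≤ (1-x) * (w * ((1-x)*(1+2*x)*(4*(1+3*x)+4*w) + (4*x+2*w)*(1+3*x)^2)) := by
      positivity
    linarith
  have h3 : (0:ℝ) < (1+x+2*y)^2 := by positivity
  have h4 : (0:ℝ) < (1+3*x)^2 := by positivity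
  refine le_of_mul_le_mul_right ?_ h3
  nlinarith [mul_le_mul_of_nonneg_right h1 h4.le, mul_le_mul_of_nonneg_right h2 (sq_nonneg (1+x+y+z))]

/-- The equilateral case: `1 - 2 * k` is the value of `tan (E / 2) ^ 2` for the equilateral triangle
with side cosine `k = 1 / √5`, the face of the regular icosahedron projected to the sphere. -/
lemma equilateral_lt {x k : ℝ} (hk : 0 < k) (hk2 : 5 * k^2 = 1) (hx : k < x) (hx1 : x ≤ 1) :
    (1-x)^2 * (1+2*x) < (1-2*k) * (1+3*x)^2 := by
  have hk' : 12 - 20 * k > 0 := by nlinarith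
  have : (1-2*k) * (1+3*x)^2 - (1-x)^2 * (1+2*x) = (x-k)*(2+(12-20*k)*x-2*x^2) := by
    linear_combination (-4*x)*hk2
  nlinarith [mul_pos (sub_pos.2 hx) (show 0 < 2+(12-20*k)*x-2*x^2 by nlinarith [mul_pos hk' (hk.trans hx)])]

lemma gram_lt_sorted {x y z k : ℝ} (hk : 0 < k) (hk2 : 5 * k^2 = 1) (hx : k < x) (hxy : x ≤ y)
    (hyz : y ≤ z) (hx1 : x ≤ 1) :
    1 + 2*x*y*z - x^2 - y^2 - z^2 < (1-2*k) * (1+x+y+z)^2 := by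
  have h1 := gram_le_equilateral (hk.trans hx).le hxy hyz hx1
  have h2 := equilateral_lt hk hk2 hx hx1
  have hx0 : 0 < x := hk.trans hx
  have h3 : (0:ℝ) < (1+x+y+z)^2 := by
    have : 0 < y := by linarith
    have : 0 < z := by linarith
    positivity
  have h4 : (0:ℝ) < (1+3*x)^2 := by positivity
  refine lt_of_mul_lt_mul_right ?_ h4.le
  nlinarith [mul_lt_mul_of_pos_right h2 h3]

/-- A spherical triangle with side cosines `x, y, z > k = 1 / √5` has smaller spherical excess than
the equilateral triangle with side cosine `k`, expressed through
`tan (E / 2) ^ 2 = Gram / (1 + x + y + z) ^ 2`. -/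
lemma gram_lt {x y z k : ℝ} (hk : 0 < k) (hk2 : 5 * k^2 = 1) (hx : k < x) (hy : k < y)
    (hz : k < z) (hx1 : x ≤ 1) (hy1 : y ≤ 1) (hz1 : z ≤ 1) :
    1 + 2*x*y*z - x^2 - y^2 - z^2 < (1-2*k) * (1+x+y+z)^2 := by
  rcases le_total x y with h | h <;> rcases le_total y z with h' | h' <;>
    rcases le_total x z with h'' | h''
  · linarith [gram_lt_sorted hk hk2 hx h h' hx1]
  · linarith [gram_lt_sorted hk hk2 hx h h' hx1]
  · linarith [gram_lt_sorted hk hk2 hx h'' h' hx1]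
  · linarith [gram_lt_sorted hk hk2 hz h'' h hz1]
  · linarith [gram_lt_sorted hk hk2 hy h h'' hy1]
  · linarith [gram_lt_sorted hk hk2 hy h' h'' hy1]
  · linarith [gram_lt_sorted hk hk2 hz h' h hz1]
  · linarith [gram_lt_sorted hk hk2 hz h' h hz1]

open Real in
/-- A spherical triangle with side cosines `x, y, z > k = 1 / √5` has angle sum less than `6π / 5`,
the angle sum of a face of the spherical icosahedron. The angles `A, B, C` enter through the
spherical law of cosines; `m₁` stands for the product of the sines of the two sides adjacent to `A`,
and similarly for `m₂` and `m₃`, while `D` is the square root of the Gram determinant. -/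
lemma angle_sum_lt {x y z k D m₁ m₂ m₃ A B C : ℝ} (hk : 0 < k) (hk2 : 5 * k^2 = 1)
    (hx : k < x) (hy : k < y) (hz : k < z) (hx1 : x < 1) (hy1 : y < 1) (hz1 : z < 1)
    (hD : 0 < D) (hD2 : D^2 = 1 + 2*x*y*z - x^2 - y^2 - z^2)
    (hm₁ : 0 < m₁) (hm₂ : 0 < m₂) (hm₃ : 0 < m₃)
    (hA : A ≤ π) (hB : B ≤ π) (hC : C ≤ π)
    (cA : cos A * m₁ = x - y*z) (cB : cos B * m₂ = y - x*z) (cC : cos C * m₃ = z - x*y)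
    (sA : sin A * m₁ = D) (sB : sin B * m₂ = D) (sC : sin C * m₃ = D) :
    A + B + C < 6 * π / 5 := by
  have hx0 := hk.trans hx
  have hy0 := hk.trans hy
  have hz0 := hk.trans hz
  set M := m₁ * m₂ * m₃ with hM
  have hMpos : 0 < M := by positivity
  have hK : 0 < (1-x)*(1-y)*(1-z) :=
    mul_pos (mul_pos (sub_pos.2 hx1) (sub_pos.2 hy1)) (sub_pos.2 hz1)
  have hM2 : M^2 = ((1-x)*(1-y)*(1-z) * ((1+x)*(1+y)*(1+z)))^2 := by
    have e1 : m₁^2 = (1-y^2)*(1-z^2) := by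
      linear_combination (-m₁^2) * sin_sq_add_cos_sq A + (sin A * m₁ + D) * sA
        + (cos A * m₁ + (x-y*z)) * cA + hD2
    have e2 : m₂^2 = (1-x^2)*(1-z^2) := by
      linear_combination (-m₂^2) * sin_sq_add_cos_sq B + (sin B * m₂ + D) * sB
        + (cos B * m₂ + (y-x*z)) * cB + hD2
    have e3 : m₃^2 = (1-x^2)*(1-y^2) := by
      linear_combination (-m₃^2) * sin_sq_add_cos_sq C + (sin C * m₃ + D) * sC
        + (cos C * m₃ + (z-x*y)) * cC + hD2
    rw [hM, mul_pow, mul_pow, e1, e2, e3]; ring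
  have hMe : M = (1-x)*(1-y)*(1-z) * ((1+x)*(1+y)*(1+z)) :=
    (pow_left_inj₀ hMpos.le (by positivity) two_ne_zero).1 hM2
  -- The sine and cosine of `A + B + C` reduce to polynomials in `x, y, z, D`; they encode
  -- `tan (E / 2) = D / (1 + x + y + z)` for the excess `E = A + B + C - π`.
  have hcos : cos (A+B+C) * M = -(((1+x+y+z)^2 - D^2) * ((1-x)*(1-y)*(1-z))/2) := by
    have : cos (A+B+C) * M = (cos A * m₁) * (cos B * m₂) * (cos C * m₃)
      - (sin A * m₁) * (sin B * m₂) * (cos C * m₃) - (sin A * m₁) * (cos B * m₂) * (sin C * m₃)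
      - (cos A * m₁) * (sin B * m₂) * (sin C * m₃) := by
      rw [cos_add, cos_add, sin_add, hM]; ring
    rw [this, cA, cB, cC, sA, sB, sC]
    linear_combination (-(x-y*z+(y-x*z)+(z-x*y)) - (1-x)*(1-y)*(1-z)/2) * hD2
  have hsin : sin (A+B+C) * M = -((1+x+y+z)*D * ((1-x)*(1-y)*(1-z))) := by
    have : sin (A+B+C) * M = -((sin A * m₁) * (sin B * m₂) * (sin C * m₃))
      + (cos A * m₁) * (cos B * m₂) * (sin C * m₃) + (cos A * m₁) * (sin B * m₂) * (cos C * m₃)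
      + (sin A * m₁) * (cos B * m₂) * (cos C * m₃) := by
      rw [sin_add, cos_add, sin_add, hM]; ring
    rw [this, cA, cB, cC, sA, sB, sC]
    linear_combination (-D) * hD2
  have hsneg : sin (A+B+C) < 0 := by
    have : 0 < (1+x+y+z)*D * ((1-x)*(1-y)*(1-z)) := by positivity
    by_contra h
    have h' := mul_nonneg (not_lt.1 h) hMpos.le
    linarith
  have hcneg : cos (A+B+C) < - cos (π/5) := by
    have hg := gram_lt hk hk2 hx hy hz hx1.le hy1.le hz1.le
    rw [← hD2] at hg
    have h5 : cos (π/5) = (1 + 5*k)/4 := by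
      have : √5 = 5 * k := by
        rw [sqrt_eq_iff_mul_self_eq (by norm_num) (by positivity)]
        linear_combination (-5) * hk2
      rw [cos_pi_div_five, this]
    rw [h5]
    refine lt_of_mul_lt_mul_right ?_ hMpos.le
    rw [hcos]
    have e : (1+x)*(1+y)*(1+z) = ((1+x+y+z)^2 + D^2)/2 := by rw [hD2]; ring
    rw [hMe, e]
    have : 0 < ((1+x+y+z)^2 - D^2) - (1+5*k)/4 * ((1+x+y+z)^2 + D^2) := by
      have h6 : (1 + (1+5*k)/4) * (1-2*k) = 1 - (1+5*k)/4 := by linear_combination (-1/2) * hk2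
      have h7 := mul_lt_mul_of_pos_left hg (show 0 < 1 + (1+5*k)/4 by positivity)
      rw [← mul_assoc, h6] at h7
      linarith
    have h8 := mul_pos this hK
    linarith
  by_contra! h
  have h2 : A+B+C < 2*π := by
    by_contra! h2
    have := sin_nonneg_of_nonneg_of_le_pi (x := A+B+C-2*π) (by linarith) (by linarith)
    rw [sin_sub_two_pi] at this
    linarith
  have := cos_le_cos_of_nonneg_of_le_pi (x := 2*π-(A+B+C)) (y := π-π/5) (by linarith)
    (by linarith [pi_pos]) (by linarith)
  rw [cos_pi_sub, cos_two_pi_sub] at this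
  linarith

open Real in
/-- At a trihedral vertex whose face angles have cosines `p, q, r` and whose dihedral angles all
have cosine less than `-k = -1 / √5`, the face angles add up to more than `9π / 5`. Passing to the
polar triangle turns the dihedral angles into sides and the face angles into angles (both through
`t ↦ π - t`), and `angle_sum_lt` applies. -/
lemma arccos_sum_gt {p q r k : ℝ} (hk : 0 < k) (hk2 : 5 * k^2 = 1)
    (hp : |p| < 1) (hq : |q| < 1) (hr : |r| < 1)
    (hG : 0 < 1 + 2*p*q*r - p^2 - q^2 - r^2)
    (h1 : (p - q*r) / (√(1-q^2) * √(1-r^2)) < -k)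
    (h2 : (q - p*r) / (√(1-p^2) * √(1-r^2)) < -k)
    (h3 : (r - p*q) / (√(1-p^2) * √(1-q^2)) < -k) :
    9 * π / 5 < arccos p + arccos q + arccos r := by
  have hp' : 0 < 1 - p^2 := by rw [sub_pos, sq_lt_one_iff_abs_lt_one]; exact hp
  have hq' : 0 < 1 - q^2 := by rw [sub_pos, sq_lt_one_iff_abs_lt_one]; exact hq
  have hr' : 0 < 1 - r^2 := by rw [sub_pos, sq_lt_one_iff_abs_lt_one]; exact hr
  obtain ⟨a, ha⟩ : ∃ a, a = √(1-p^2) := ⟨_, rfl⟩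
  obtain ⟨b, hb⟩ : ∃ a, a = √(1-q^2) := ⟨_, rfl⟩
  obtain ⟨c, hc⟩ : ∃ a, a = √(1-r^2) := ⟨_, rfl⟩
  rw [← hb, ← hc] at h1
  rw [← ha, ← hc] at h2
  rw [← ha, ← hb] at h3
  have ha0 : 0 < a := ha ▸ sqrt_pos.2 hp'
  have hb0 : 0 < b := hb ▸ sqrt_pos.2 hq'
  have hc0 : 0 < c := hc ▸ sqrt_pos.2 hr'
  have ha2 : a^2 = 1 - p^2 := ha ▸ sq_sqrt hp'.le
  have hb2 : b^2 = 1 - q^2 := hb ▸ sq_sqrt hq'.le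
  have hc2 : c^2 = 1 - r^2 := hc ▸ sq_sqrt hr'.le
  obtain ⟨G, hGd⟩ : ∃ G, G = 1 + 2*p*q*r - p^2 - q^2 - r^2 := ⟨_, rfl⟩
  rw [← hGd] at hG
  have cp := cos_arccos (neg_le_of_abs_le hp.le) (le_of_abs_le hp.le)
  have cq := cos_arccos (neg_le_of_abs_le hq.le) (le_of_abs_le hq.le)
  have cr := cos_arccos (neg_le_of_abs_le hr.le) (le_of_abs_le hr.le)
  have e1 : 1 - (-((p - q*r)/(b*c)))^2 = G / (b*c)^2 := by
    field_simp
    rw [hb2, hc2, hGd]; ring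
  have e2 : 1 - (-((q - p*r)/(a*c)))^2 = G / (a*c)^2 := by
    field_simp
    rw [ha2, hc2, hGd]; ring
  have e3 : 1 - (-((r - p*q)/(a*b)))^2 = G / (a*b)^2 := by
    field_simp
    rw [ha2, hb2, hGd]; ring
  have hnum : G^2 = a^2*b^2*c^2 - 2*(p - q*r)*(q - p*r)*(r - p*q) - (p - q*r)^2*a^2
      - (q - p*r)^2*b^2 - (r - p*q)^2*c^2 := by
    rw [ha2, hb2, hc2, hGd]; ring
  -- The Gram determinant of the polar triangle.
  have hD2 : (G/(a*b*c))^2 = 1 + 2*(-((p - q*r)/(b*c)))*(-((q - p*r)/(a*c)))*(-((r - p*q)/(a*b)))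
      - (-((p - q*r)/(b*c)))^2 - (-((q - p*r)/(a*c)))^2 - (-((r - p*q)/(a*b)))^2 := by
    rw [div_pow, hnum]
    field_simp
    ring
  have key := angle_sum_lt (x := -((p - q*r)/(b*c))) (y := -((q - p*r)/(a*c)))
    (z := -((r - p*q)/(a*b))) (k := k) (D := G/(a*b*c)) (m₁ := G/(a^2*b*c)) (m₂ := G/(a*b^2*c))
    (m₃ := G/(a*b*c^2)) (A := π - arccos p) (B := π - arccos q) (C := π - arccos r)
    hk hk2 (by linarith) (by linarith) (by linarith)
    (by
      have : 0 < G / (b*c)^2 := by positivity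
      exact lt_of_abs_lt ((sq_lt_one_iff_abs_lt_one _).1 (by linarith)))
    (by
      have : 0 < G / (a*c)^2 := by positivity
      exact lt_of_abs_lt ((sq_lt_one_iff_abs_lt_one _).1 (by linarith)))
    (by
      have : 0 < G / (a*b)^2 := by positivity
      exact lt_of_abs_lt ((sq_lt_one_iff_abs_lt_one _).1 (by linarith)))
    (by positivity)
    hD2
    (by positivity) (by positivity) (by positivity)
    (by linarith [arccos_nonneg p]) (by linarith [arccos_nonneg q]) (by linarith [arccos_nonneg r])
    (by
      rw [cos_pi_sub, cp]
      field_simp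
      rw [ha2, hGd]; ring)
    (by
      rw [cos_pi_sub, cq]
      field_simp
      rw [hb2, hGd]; ring)
    (by
      rw [cos_pi_sub, cr]
      field_simp
      rw [hc2, hGd]; ring)
    (by
      rw [sin_pi_sub, sin_arccos, ← ha]
      field_simp)
    (by
      rw [sin_pi_sub, sin_arccos, ← hb]
      field_simp)
    (by
      rw [sin_pi_sub, sin_arccos, ← hc]
      field_simp)
  linarith

/-! ### Girard's bound for the volume of a cone in the ball -/

lemma measurePreserving_cyl : MeasurePreserving
    (fun u : E3 => (((u 0, u 1), u 2) : (ℝ × ℝ) × ℝ)) := by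
  have h1 := PiLp.volume_preserving_ofLp (Fin 3)
  have h2 := volume_preserving_piFinSuccAbove (fun _ : Fin 3 => ℝ) 2
  have h3 := (MeasurePreserving.id (volume : Measure ℝ)).prod (volume_preserving_finTwoArrow ℝ)
  have h4 : MeasurePreserving (Prod.swap : ℝ × (ℝ × ℝ) → (ℝ × ℝ) × ℝ) :=
    Measure.measurePreserving_swap
  exact h4.comp (h3.comp (h2.comp h1))

/-- The part of the unit ball lying over a set `A` in the plane of the first two coordinates, computed
in cylindrical coordinates. -/
lemma volume_ball_inter_cyl {A : Set (ℝ × ℝ)} (hA : MeasurableSet A) :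
    volume {u : E3 | ‖u‖ ≤ 1 ∧ (u 0, u 1) ∈ A} =
      ∫⁻ q in polarCoord.target, ENNReal.ofReal q.1 *
        A.indicator (fun _ => volume {z : ℝ | q.1^2 + z^2 ≤ 1}) (polarCoord.symm q) := by
  have hT : MeasurableSet {x : (ℝ × ℝ) × ℝ | x.1.1^2 + x.1.2^2 + x.2^2 ≤ 1 ∧ x.1 ∈ A} := by
    have m1 : MeasurableSet {x : (ℝ × ℝ) × ℝ | x.1.1^2 + x.1.2^2 + x.2^2 ≤ 1} :=
      measurableSet_le (by fun_prop) (by fun_prop)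
    exact m1.inter (measurable_fst hA)
  have h1 : {u : E3 | ‖u‖ ≤ 1 ∧ (u 0, u 1) ∈ A} =
      (fun u : E3 => (((u 0, u 1), u 2) : (ℝ × ℝ) × ℝ)) ⁻¹'
        {x : (ℝ × ℝ) × ℝ | x.1.1^2 + x.1.2^2 + x.2^2 ≤ 1 ∧ x.1 ∈ A} := by
    ext u
    simp only [Set.mem_ofPred_eq, Set.mem_preimage]
    rw [EuclideanSpace.norm_eq, Real.sqrt_le_one, Fin.sum_univ_three]
    simp
  rw [h1, measurePreserving_cyl.measure_preimage hT.nullMeasurableSet, Measure.volume_eq_prod,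
    Measure.prod_apply hT, ← lintegral_comp_polarCoord_symm]
  refine lintegral_congr fun q => ?_
  rw [smul_eq_mul]
  congr 1
  by_cases hq : polarCoord.symm q ∈ A
  · rw [Set.indicator_of_mem hq]
    congr 1
    ext z
    simp only [Set.mem_preimage, Set.mem_ofPred_eq, hq, and_true]
    have : (polarCoord.symm q).1^2 + (polarCoord.symm q).2^2 = q.1^2 := by
      simp [polarCoord_symm_apply, mul_pow, ← mul_add]
    rw [this]
  · rw [Set.indicator_of_notMem hq]
    convert measure_empty (μ := (volume : Measure ℝ))
    ext z
    simp only [Set.mem_preimage, Set.mem_ofPred_eq, hq, and_false, Set.mem_empty_iff_false]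

lemma lintegral_rect {a b : ℝ} (g : ℝ → ℝ≥0∞) (hg : Measurable g) :
    ∫⁻ q in (Set.Ioi (0:ℝ) ×ˢ Set.Ioo a b), g q.1 =
      (∫⁻ r in Set.Ioi (0:ℝ), g r) * ENNReal.ofReal (b - a) := by
  rw [Measure.volume_eq_prod, ← Measure.prod_restrict,
    lintegral_prod (fun q : ℝ × ℝ => g q.1) (hg.comp measurable_fst).aemeasurable]
  simp only [lintegral_const, Measure.restrict_apply MeasurableSet.univ, Set.univ_inter,
    Real.volume_Ioo]
  rw [lintegral_mul_const _ hg]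

/-- A wedge `0 ≤ θ ≤ β` around the third coordinate axis contains at most the fraction `β / 2π` of the
unit ball. -/
lemma wedge_model {β : ℝ} (h0 : 0 < β) :
    volume {u : E3 | ‖u‖ ≤ 1 ∧
      0 ≤ u 1 ∧ 0 ≤ Real.sin β * u 0 - Real.cos β * u 1} * ENNReal.ofReal (2 * Real.pi) ≤
    volume (Metric.closedBall (0 : E3) 1) * ENNReal.ofReal β := by
  have hm : Measurable (fun r : ℝ => volume {z : ℝ | r^2 + z^2 ≤ 1}) := by
    have : MeasurableSet {x : ℝ × ℝ | x.1^2 + x.2^2 ≤ 1} :=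
      measurableSet_le (by fun_prop) (by fun_prop)
    exact measurable_measure_prodMk_left this
  have hg : Measurable (fun r : ℝ => ENNReal.ofReal r * volume {z : ℝ | r^2 + z^2 ≤ 1}) :=
    ENNReal.measurable_ofReal.mul hm
  obtain ⟨I, hI⟩ : ∃ I, I = ∫⁻ r in Set.Ioi (0:ℝ),
    ENNReal.ofReal r * volume {z : ℝ | r^2 + z^2 ≤ 1} := ⟨_, rfl⟩
  have hball : volume (Metric.closedBall (0 : E3) 1) =
      I * ENNReal.ofReal (2 * Real.pi) := by
    have := volume_ball_inter_cyl MeasurableSet.univ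
    simp only [Set.mem_univ, and_true, Set.indicator_univ] at this
    rw [polarCoord_target, lintegral_rect _ hg, ← hI] at this
    rw [show 2 * Real.pi = Real.pi - - Real.pi by ring, ← this]
    congr 1
    ext u; simp
  have hA : MeasurableSet {p : ℝ × ℝ | 0 ≤ p.2 ∧ 0 ≤ Real.sin β * p.1 - Real.cos β * p.2} := by
    have m1 : MeasurableSet {p : ℝ × ℝ | 0 ≤ p.2} :=
      measurableSet_le (by fun_prop) (by fun_prop)
    have m2 : MeasurableSet {p : ℝ × ℝ | 0 ≤ Real.sin β * p.1 - Real.cos β * p.2} :=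
      measurableSet_le (by fun_prop) (by fun_prop)
    exact m1.inter m2
  have hw := volume_ball_inter_cyl hA
  simp only [Set.mem_ofPred_eq] at hw
  rw [hw, hball, mul_assoc, mul_comm (ENNReal.ofReal (2 * Real.pi)), ← mul_assoc]
  gcongr
  have hR : ∫⁻ q in (Set.Ioi (0:ℝ) ×ˢ Set.Icc 0 β),
    ENNReal.ofReal q.1 * volume {z : ℝ | q.1^2 + z^2 ≤ 1} = I * ENNReal.ofReal β := by
    have : ∫⁻ q in (Set.Ioi (0:ℝ) ×ˢ Set.Ioo 0 β),
      ENNReal.ofReal q.1 * volume {z : ℝ | q.1^2 + z^2 ≤ 1} = I * ENNReal.ofReal β := by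
      rw [lintegral_rect _ hg, hI, sub_zero]
    rw [← this]
    refine setLIntegral_congr ?_
    rw [Measure.volume_eq_prod]
    exact Measure.set_prod_ae_eq (ae_eq_refl _) Ioo_ae_eq_Icc.symm
  rw [← hR, ← lintegral_indicator (by exact polarCoord.open_target.measurableSet),
    ← lintegral_indicator (measurableSet_Ioi.prod measurableSet_Icc)]
  refine lintegral_mono fun q => ?_
  obtain ⟨r, θ⟩ := q
  by_cases hq : (r, θ) ∈ polarCoord.target
  · rw [Set.indicator_of_mem hq]
    by_cases hq2 : polarCoord.symm (r, θ) ∈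
        {p : ℝ × ℝ | 0 ≤ p.2 ∧ 0 ≤ Real.sin β * p.1 - Real.cos β * p.2}
    · rw [Set.indicator_of_mem hq2, Set.indicator_of_mem]
      simp only [polarCoord_target, Set.mem_prod, Set.mem_Ioi, Set.mem_Ioo] at hq
      simp only [polarCoord_symm_apply, Set.mem_ofPred_eq] at hq2
      obtain ⟨hr, hθ1, hθ2⟩ := hq
      obtain ⟨ha, hb⟩ := hq2
      have ha' : 0 ≤ Real.sin θ := nonneg_of_mul_nonneg_right ha hr
      have hb' : 0 ≤ Real.sin (β - θ) := by
        rw [Real.sin_sub]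
        have : 0 ≤ r * (Real.sin β * Real.cos θ - Real.cos β * Real.sin θ) := by linarith
        exact nonneg_of_mul_nonneg_right this hr
      refine ⟨hr, ?_, ?_⟩
      · by_contra! h
        exact absurd (Real.sin_neg_of_neg_of_neg_pi_lt h hθ1) (not_lt.2 ha')
      · by_contra! h
        exact absurd (Real.sin_neg_of_neg_of_neg_pi_lt (x := β - θ) (by simpa using h)
          (by linarith)) (not_lt.2 hb')
    · rw [Set.indicator_of_notMem hq2]; simp
  · rw [Set.indicator_of_notMem hq]; simp

/-- The intersection of two half-spaces with unit normals `d, e` contains at most the fraction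
`(π - ∠(d, e)) / 2π` of the unit ball. -/
lemma wedge_le {d e : E3} (hd : ‖d‖ = 1) (he : ‖e‖ = 1)
    (hlt : |⟪d, e⟫| < 1) :
    volume {u : E3 | ‖u‖ ≤ 1 ∧ ⟪d, u⟫ ≤ 0 ∧ ⟪e, u⟫ ≤ 0} *
      ENNReal.ofReal (2 * Real.pi) ≤
    volume (Metric.closedBall (0 : E3) 1) *
      ENNReal.ofReal (Real.pi - Real.arccos ⟪d, e⟫) := by
  obtain ⟨hl1, hl2⟩ := abs_lt.1 hlt
  set β := Real.pi - Real.arccos ⟪d, e⟫ with hβ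
  have hβ0 : 0 < β := by
    have := Real.arccos_lt_pi.2 hl1
    linarith
  have hβ1 : β < Real.pi := by
    have := Real.arccos_pos.2 hl2
    linarith
  have hc : Real.cos β = - ⟪d, e⟫ := by
    rw [hβ, Real.cos_pi_sub, Real.cos_arccos hl1.le hl2.le]
  have hs : 0 < Real.sin β := Real.sin_pos_of_pos_of_lt_pi hβ0 hβ1
  have hsc := Real.sin_sq_add_cos_sq β
  -- In an orthonormal frame starting with `v 0, v 1`, the wedge is the sector `0 ≤ θ ≤ β`.
  let v : Fin 3 → E3 :=
    ![(Real.sin β)⁻¹ • (-(Real.cos β • d) - e), -d, 0]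
  have hdd : ⟪d, d⟫ = (1:ℝ) := by rw [real_inner_self_eq_norm_sq, hd]; norm_num
  have hee : ⟪e, e⟫ = (1:ℝ) := by rw [real_inner_self_eq_norm_sq, he]; norm_num
  have hde : ⟪d, e⟫ = - Real.cos β := by rw [hc]; ring
  have hed : ⟪e, d⟫ = - Real.cos β := by rw [real_inner_comm, hde]
  have h00 : ⟪v 0, v 0⟫ = (1:ℝ) := by
    simp only [v, Matrix.cons_val_zero, inner_smul_left, inner_smul_right, inner_sub_left,
      inner_sub_right, inner_neg_left, inner_neg_right, hdd, hee, hde, hed]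
    simp only [conj_trivial]
    field_simp
    linarith
  have h11 : ⟪v 1, v 1⟫ = (1:ℝ) := by
    simp [v, hd]
  have h01 : ⟪v 0, v 1⟫ = (0:ℝ) := by
    simp only [v, Matrix.cons_val_zero, Matrix.cons_val_one, inner_smul_left, inner_sub_left,
      inner_neg_left, inner_neg_right, hdd, hed]
    simp
  have hon : Orthonormal ℝ (({0, 1} : Set (Fin 3)).domRestrict v) := by
    rw [orthonormal_iff_ite]
    rintro ⟨i, hi⟩ ⟨j, hj⟩
    rcases hi with rfl | rfl <;> rcases hj with rfl | rfl
    · exact h00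
    · exact h01
    · exact (real_inner_comm (v 0) (v 1)).symm ▸ h01
    · exact h11
  obtain ⟨b, hb⟩ := hon.exists_orthonormalBasis_extension_of_card_eq (by simp)
  have hb0 := hb 0 (by simp)
  have hb1 := hb 1 (by simp)
  have hmp := b.measurePreserving_repr
  have hpre : {u : E3 | ‖u‖ ≤ 1 ∧ ⟪d, u⟫ ≤ 0 ∧ ⟪e, u⟫ ≤ 0} =
      b.repr ⁻¹' {u : E3 | ‖u‖ ≤ 1 ∧
      0 ≤ u 1 ∧ 0 ≤ Real.sin β * u 0 - Real.cos β * u 1} := by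
    ext u
    simp only [Set.mem_ofPred_eq, Set.mem_preimage, LinearIsometryEquiv.norm_map,
      OrthonormalBasis.repr_apply_apply, hb0, hb1]
    have e1 : ⟪v 1, u⟫ = - ⟪d, u⟫ := by simp [v]
    have e2 : Real.sin β * ⟪v 0, u⟫ - Real.cos β * ⟪v 1, u⟫ = - ⟪e, u⟫ := by
      rw [e1]
      simp only [v, Matrix.cons_val_zero, inner_smul_left, inner_sub_left, inner_neg_left]
      simp only [conj_trivial]
      field_simp
      ring
    rw [e2, e1, neg_nonneg, neg_nonneg]
  rw [hpre, hmp.measure_preimage]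
  · exact wedge_model hβ0
  · have m1 : MeasurableSet {u : E3 | ‖u‖ ≤ 1} :=
      measurableSet_le (by fun_prop) (by fun_prop)
    have m2 : MeasurableSet {u : E3 | 0 ≤ u 1} :=
      measurableSet_le (by fun_prop) (by fun_prop)
    have m3 : MeasurableSet {u : E3 |
        0 ≤ Real.sin β * u 0 - Real.cos β * u 1} :=
      measurableSet_le (by fun_prop) (by fun_prop)
    exact (m1.inter (m2.inter m3)).nullMeasurableSet

lemma ae_inner_ne {d : E3} (hd : ‖d‖ = 1) :
    ∀ᵐ u : E3, ⟪d, u⟫ ≠ 0 := by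
  have h := Measure.addHaar_submodule (volume : Measure (E3))
    ((ℝ ∙ d)ᗮ) (by
      intro h
      have : d ∈ (ℝ ∙ d)ᗮ := h ▸ Submodule.mem_top
      rw [Submodule.mem_orthogonal_singleton_iff_inner_right, real_inner_self_eq_norm_sq, hd] at this
      norm_num at this)
  rw [ae_iff]
  convert h using 2
  ext u
  simp [Submodule.mem_orthogonal_singleton_iff_inner_right]

/-- Girard's area bound: the cone polar to `d, e, f` contains at most the fraction
`(2π - ∠(d, e) - ∠(d, f) - ∠(e, f)) / 4π` of the unit ball. This is inclusion-exclusion for the three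
half-spaces, using that the cone and the complement of their union are antipodal up to a null
set. -/
lemma cone_le {d e f : E3} (hd : ‖d‖ = 1) (he : ‖e‖ = 1) (hf : ‖f‖ = 1)
    (hde : |⟪d, e⟫| < 1) (hdf : |⟪d, f⟫| < 1) (hef : |⟪e, f⟫| < 1) :
    volume.real {u : E3 | ‖u‖ ≤ 1 ∧ ⟪d, u⟫ ≤ 0 ∧ ⟪e, u⟫ ≤ 0 ∧ ⟪f, u⟫ ≤ 0} *
      (4 * Real.pi) ≤
    volume.real (Metric.closedBall (0 : E3) 1) *
      (2 * Real.pi - (Real.arccos ⟪d, e⟫ + Real.arccos ⟪d, f⟫ + Real.arccos ⟪e, f⟫)) := by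
  set B : Set E3 := Metric.closedBall 0 1 with hB
  have hBm : MeasurableSet B := measurableSet_closedBall
  set μ : Measure E3 := volume.restrict B with hμ
  have : IsFiniteMeasure μ := ⟨by
    rw [hμ, Measure.restrict_apply_univ]; exact measure_closedBall_lt_top⟩
  let H : E3 → Set E3 := fun d => {u | ⟪d, u⟫ ≤ 0}
  have hH : ∀ d, MeasurableSet (H d) := fun d => measurableSet_le (by fun_prop) (by fun_prop)
  have hneg : ∀ s : Set E3, MeasurableSet s → μ.real (Neg.neg ⁻¹' s) = μ.real s := by
    intro s hs
    rw [measureReal_def, measureReal_def, hμ, Measure.restrict_apply hs,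
      Measure.restrict_apply (measurable_neg hs)]
    have : Neg.neg ⁻¹' s ∩ B = Neg.neg ⁻¹' (s ∩ B) := by
      ext u; simp [hB]
    rw [this, (Measure.measurePreserving_neg (volume : Measure E3)).measure_preimage
      (hs.inter hBm).nullMeasurableSet]
  set b := volume.real B with hb
  have hbu : μ.real Set.univ = b := by
    rw [measureReal_def, hμ, Measure.restrict_apply_univ]; rfl
  have hhalf : ∀ d, b / 2 ≤ μ.real (H d) := by
    intro d
    have h1 : (Set.univ : Set E3) ⊆ H d ∪ Neg.neg ⁻¹' (H d) := by
      intro u _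
      simp only [H, Set.mem_union, Set.mem_preimage, Set.mem_ofPred_eq, inner_neg_right]
      rcases le_total ⟪d, u⟫ (0:ℝ) with h | h
      · exact Or.inl h
      · exact Or.inr (by linarith)
    have h2 := (measureReal_mono (μ := μ) h1).trans (measureReal_union_le _ _)
    rw [hneg _ (hH d), hbu] at h2
    linarith
  have hw : ∀ d e : E3, ‖d‖ = 1 → ‖e‖ = 1 → |⟪d, e⟫| < 1 →
      μ.real (H d ∩ H e) * (2 * Real.pi) ≤ b * (Real.pi - Real.arccos ⟪d, e⟫) := by
    intro d e hd he hde
    have h := wedge_le hd he hde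
    have h' := ENNReal.toReal_mono (ENNReal.mul_ne_top measure_closedBall_lt_top.ne
      ENNReal.ofReal_ne_top) h
    rw [ENNReal.toReal_mul, ENNReal.toReal_mul, ENNReal.toReal_ofReal (by positivity),
      ENNReal.toReal_ofReal (by linarith [Real.arccos_le_pi ⟪d, e⟫])] at h'
    convert h' using 2
    swap
    · rfl
    rw [measureReal_def, hμ, Measure.restrict_apply ((hH d).inter (hH e))]
    congr 2
    ext u
    simp only [H, hB, Set.mem_inter_iff, Set.mem_ofPred_eq, Metric.mem_closedBall, dist_zero_right]
    tauto
  have hm : volume.real {u : E3 | ‖u‖ ≤ 1 ∧ ⟪d, u⟫ ≤ 0 ∧ ⟪e, u⟫ ≤ 0 ∧ ⟪f, u⟫ ≤ 0} =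
      μ.real ((H d ∩ H f) ∩ (H e ∩ H f)) := by
    rw [measureReal_def, measureReal_def, hμ,
      Measure.restrict_apply (((hH d).inter (hH f)).inter ((hH e).inter (hH f)))]
    congr 2
    ext u
    simp only [H, hB, Set.mem_inter_iff, Set.mem_ofPred_eq, Metric.mem_closedBall, dist_zero_right]
    tauto
  -- The antipode of the complement of the union is the polar cone, up to a null set.
  have hanti : μ.real ((H d ∩ H f) ∩ (H e ∩ H f)) ≤ μ.real ((H d ∪ H e) ∪ H f)ᶜ := by
    rw [← hneg _ (((hH d).union (hH e)).union (hH f)).compl]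
    refine (measureReal_congr ?_).le
    have hr : ∀ᵐ u ∂μ, ⟪d, u⟫ ≠ 0 ∧ ⟪e, u⟫ ≠ 0 ∧ ⟪f, u⟫ ≠ 0 := by
      refine ae_restrict_of_ae ?_
      filter_upwards [ae_inner_ne hd, ae_inner_ne he, ae_inner_ne hf] with u h1 h2 h3
      exact ⟨h1, h2, h3⟩
    filter_upwards [hr] with u ⟨h1, h2, h3⟩
    refine propext ?_
    change ((⟪d, u⟫ ≤ 0 ∧ ⟪f, u⟫ ≤ 0) ∧ (⟪e, u⟫ ≤ 0 ∧ ⟪f, u⟫ ≤ 0)) ↔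
      ¬ ((⟪d, -u⟫ ≤ 0 ∨ ⟪e, -u⟫ ≤ 0) ∨ ⟪f, -u⟫ ≤ 0)
    simp only [inner_neg_right, not_or, not_le, Left.neg_nonpos_iff]
    rw [lt_iff_le_and_ne, lt_iff_le_and_ne, lt_iff_le_and_ne]
    tauto
  have i1 := measureReal_union_add_inter (μ := μ) (s := H d) (hH e)
  have i2 := measureReal_union_add_inter (μ := μ) (s := H d ∪ H e) (hH f)
  have i3 := measureReal_union_add_inter (μ := μ) (s := H d ∩ H f) ((hH e).inter (hH f))
  rw [Set.union_inter_distrib_right] at i2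
  have i4 := measureReal_add_measureReal_compl (μ := μ) (((hH d).union (hH e)).union (hH f))
  rw [hbu] at i4
  have w1 := hw d e hd he hde
  have w2 := hw d f hd hf hdf
  have w3 := hw e f he hf hef
  have h1 := hhalf d
  have h2 := hhalf e
  have h3 := hhalf f
  rw [hm]
  have key : 2 * μ.real ((H d ∩ H f) ∩ (H e ∩ H f)) ≤ μ.real (H d ∩ H e) + μ.real (H d ∩ H f)
    + μ.real (H e ∩ H f) - b / 2 := by linarith
  have := mul_le_mul_of_nonneg_right key (show 0 ≤ 2 * Real.pi by positivity)
  linarith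

/-! ### Dihedral angles of a polytope inside a cone -/

/-- The arc of the unit circle spanned by unit vectors `e, f` has length at most their angle, because
it is the image of `[0, α]` under the 1-Lipschitz arc-length parametrisation. -/
lemma hausdorff_arc_le {e f : E3} (he : ‖e‖ = 1) (hf : ‖f‖ = 1) (hef : |⟪e, f⟫| < 1) :
    μH[1] {u : E3 | ‖u‖ = 1 ∧ ∃ a b : ℝ, 0 ≤ a ∧ 0 ≤ b ∧ u = a • e + b • f} ≤
      ENNReal.ofReal (Real.arccos ⟪e, f⟫) := by
  obtain ⟨hl1, hl2⟩ := abs_lt.1 hef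
  set α := Real.arccos ⟪e, f⟫ with hα
  have hα0 : 0 < α := Real.arccos_pos.2 hl2
  have hα1 : α < Real.pi := Real.arccos_lt_pi.2 hl1
  have hc : ⟪e, f⟫ = Real.cos α := (Real.cos_arccos hl1.le hl2.le).symm
  have hs : 0 < Real.sin α := Real.sin_pos_of_pos_of_lt_pi hα0 hα1
  have hsc := Real.sin_sq_add_cos_sq α
  have hee : ⟪e, e⟫ = (1:ℝ) := by rw [real_inner_self_eq_norm_sq, he]; norm_num
  have hff : ⟪f, f⟫ = (1:ℝ) := by rw [real_inner_self_eq_norm_sq, hf]; norm_num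
  have hfe : ⟪f, e⟫ = Real.cos α := by rw [real_inner_comm, hc]
  obtain ⟨g, hg⟩ : ∃ g : E3, g = (Real.sin α)⁻¹ • (f - Real.cos α • e) := ⟨_, rfl⟩
  have hfg : f = Real.cos α • e + Real.sin α • g := by
    rw [hg, smul_smul, mul_inv_cancel₀ hs.ne', one_smul]; abel
  have heg : ⟪e, g⟫ = (0:ℝ) := by
    rw [hg, inner_smul_right, inner_sub_right, inner_smul_right, hee, hc]; ring
  have hgg : ⟪g, g⟫ = (1:ℝ) := by
    rw [hg]
    simp only [inner_smul_left, inner_smul_right, inner_sub_left, inner_sub_right, hee, hff,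
      hfe, hc, conj_trivial]
    field_simp
    linarith
  have hge : ⟪g, e⟫ = (0:ℝ) := by rw [real_inner_comm, heg]
  have hnorm : ∀ x y : ℝ, ‖x • e + y • g‖^2 = x^2 + y^2 := by
    intro x y
    rw [← real_inner_self_eq_norm_sq]
    simp only [inner_add_left, inner_add_right, inner_smul_left, inner_smul_right, hee, hgg, heg,
      hge, conj_trivial]
    ring
  let γ : ℝ → E3 := fun t => Real.cos t • e + Real.sin t • g
  have hγ : LipschitzWith 1 γ := by
    refine LipschitzWith.of_dist_le_mul fun s t => ?_
    rw [NNReal.coe_one, one_mul, dist_eq_norm, Real.dist_eq]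
    have h1 : γ s - γ t = (Real.cos s - Real.cos t) • e + (Real.sin s - Real.sin t) • g := by
      simp only [γ, sub_smul]; abel
    refine abs_le_of_sq_le_sq' ?_ (abs_nonneg _) |>.2
    rw [h1, hnorm, sq_abs]
    have h2 := Real.one_sub_sq_div_two_le_cos (x := s - t)
    rw [Real.cos_sub] at h2
    linarith [Real.sin_sq_add_cos_sq s, Real.sin_sq_add_cos_sq t]
  have hsub : {u : E3 | ‖u‖ = 1 ∧ ∃ a b : ℝ, 0 ≤ a ∧ 0 ≤ b ∧ u = a • e + b • f} ⊆
      γ '' Set.Icc 0 α := by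
    rintro u ⟨hu, a, b, ha, hb, rfl⟩
    have h1 : a • e + b • f = (a + b * Real.cos α) • e + (b * Real.sin α) • g := by
      conv_lhs => rw [hfg]
      module
    have h2 : (a + b * Real.cos α)^2 + (b * Real.sin α)^2 = 1 := by
      rw [← hnorm, ← h1, hu]; norm_num
    have h3 : |a + b * Real.cos α| ≤ 1 := by
      rw [← sq_le_one_iff_abs_le_one]
      linarith [sq_nonneg (b * Real.sin α)]
    obtain ⟨h3a, h3b⟩ := abs_le.1 h3
    have hcos := Real.cos_arccos h3a h3b
    have hsin : Real.sin (Real.arccos (a + b * Real.cos α)) = b * Real.sin α := by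
      rw [Real.sin_arccos, Real.sqrt_eq_iff_mul_self_eq (by linarith [sq_nonneg (b * Real.sin α)])
        (by positivity)]
      linarith
    refine ⟨Real.arccos (a + b * Real.cos α), ⟨Real.arccos_nonneg _, ?_⟩, ?_⟩
    · -- The sine of `α - θ` is `a * sin α`, which is nonnegative, so `θ ≤ α`.
      by_contra! h
      have h4 := Real.sin_neg_of_neg_of_neg_pi_lt
        (x := α - Real.arccos (a + b * Real.cos α)) (by linarith)
        (by linarith [Real.arccos_le_pi (a + b * Real.cos α)])
      rw [Real.sin_sub, hcos, hsin] at h4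
      have : 0 ≤ a * Real.sin α := by positivity
      linarith
    · simp only [γ]
      rw [hcos, hsin, h1]
  calc _ ≤ μH[1] (γ '' Set.Icc 0 α) := measure_mono hsub
    _ ≤ μH[1] (Set.Icc 0 α) := by
      simpa using hγ.hausdorffMeasure_image_le (d := 1) zero_le_one (Set.Icc 0 α)
    _ = ENNReal.ofReal α := by
      rw [hausdorffMeasure_real, Real.volume_Icc, sub_zero]

/-- If `P` lies in the cone at `v` over unit directions `g₁, g₂, g₃`, then its dihedral angle at the edge
along `g₁` is at most that of the cone, as given by the spherical law of cosines. -/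
lemma dihedralAngle3_le {P : Set E3} {v g₁ g₂ g₃ : E3} {l : ℝ} (hl : 0 < l)
    (hg₁ : ‖g₁‖ = 1) (hg₂ : ‖g₂‖ = 1) (hg₃ : ‖g₃‖ = 1)
    (hP : ∀ x ∈ P, ∃ a b c : ℝ, 0 ≤ a ∧ 0 ≤ b ∧ 0 ≤ c ∧ x = v + (a • g₁ + b • g₂ + c • g₃))
    {p q r : ℝ} (hp : ⟪g₂, g₃⟫ = p) (hq : ⟪g₁, g₃⟫ = q) (hr : ⟪g₁, g₂⟫ = r)
    (hq1 : |q| < 1) (hr1 : |r| < 1) (hG : 0 < 1 + 2*p*q*r - p^2 - q^2 - r^2) :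
    dihedralAngle3 P v (v + l • g₁) ≤
      ENNReal.ofReal (Real.arccos ((p - q*r) / (√(1-q^2) * √(1-r^2)))) := by
  have hq' : 0 < 1 - q^2 := by rw [sub_pos, sq_lt_one_iff_abs_lt_one]; exact hq1
  have hr' : 0 < 1 - r^2 := by rw [sub_pos, sq_lt_one_iff_abs_lt_one]; exact hr1
  obtain ⟨b, hb⟩ : ∃ a, a = √(1-q^2) := ⟨_, rfl⟩
  obtain ⟨c, hc⟩ : ∃ a, a = √(1-r^2) := ⟨_, rfl⟩
  rw [← hb, ← hc]
  have hb0 : 0 < b := hb ▸ Real.sqrt_pos.2 hq'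
  have hc0 : 0 < c := hc ▸ Real.sqrt_pos.2 hr'
  have hb2 : b^2 = 1 - q^2 := hb ▸ Real.sq_sqrt hq'.le
  have hc2 : c^2 = 1 - r^2 := hc ▸ Real.sq_sqrt hr'.le
  have h11 : ⟪g₁, g₁⟫ = (1:ℝ) := by rw [real_inner_self_eq_norm_sq, hg₁]; norm_num
  have h22 : ⟪g₂, g₂⟫ = (1:ℝ) := by rw [real_inner_self_eq_norm_sq, hg₂]; norm_num
  have h33 : ⟪g₃, g₃⟫ = (1:ℝ) := by rw [real_inner_self_eq_norm_sq, hg₃]; norm_num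
  have hr2 : ⟪g₂, g₁⟫ = r := by rw [real_inner_comm, hr]
  have hq2 : ⟪g₃, g₁⟫ = q := by rw [real_inner_comm, hq]
  -- `e` and `f` are the normalised components of `g₂` and `g₃` orthogonal to `g₁`.
  obtain ⟨e, he⟩ : ∃ e : E3, e = c⁻¹ • (g₂ - r • g₁) := ⟨_, rfl⟩
  obtain ⟨f, hf⟩ : ∃ f : E3, f = b⁻¹ • (g₃ - q • g₁) := ⟨_, rfl⟩
  have hef : ⟪e, f⟫ = (p - q*r) / (b * c) := by
    rw [he, hf]
    simp only [inner_smul_left, inner_smul_right, inner_sub_left, inner_sub_right, h11, hp,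
      hr2, hq, conj_trivial]
    field_simp
    ring
  have hee : ‖e‖ = 1 := by
    have : ‖e‖^2 = 1 := by
      rw [← real_inner_self_eq_norm_sq, he]
      simp only [inner_smul_left, inner_smul_right, inner_sub_left, inner_sub_right, h11, h22, hr,
        hr2, conj_trivial]
      field_simp
      rw [hc2]; ring
    exact (pow_eq_one_iff_of_nonneg (norm_nonneg _) two_ne_zero).1 this
  have hff : ‖f‖ = 1 := by
    have : ‖f‖^2 = 1 := by
      rw [← real_inner_self_eq_norm_sq, hf]
      simp only [inner_smul_left, inner_smul_right, inner_sub_left, inner_sub_right, h11, h33, hq,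
        hq2, conj_trivial]
      field_simp
      rw [hb2]; ring
    exact (pow_eq_one_iff_of_nonneg (norm_nonneg _) two_ne_zero).1 this
  have hlt : |⟪e, f⟫| < 1 := by
    rw [hef, ← sq_lt_one_iff_abs_lt_one, div_pow, mul_pow, hb2, hc2, div_lt_one (by positivity)]
    linarith
  rw [← hef]
  refine le_trans (measure_mono ?_) (hausdorff_arc_le hee hff hlt)
  rintro u ⟨hu, hperp, t, ht, hmem⟩
  refine ⟨hu, ?_⟩
  obtain ⟨x, y, z, hx, hy, hz, hxyz⟩ := hP _ hmem
  have hperp' : ⟪g₁, u⟫ = (0:ℝ) := by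
    rw [add_sub_cancel_left, inner_smul_right] at hperp
    rw [real_inner_comm]
    exact (mul_eq_zero.1 hperp).resolve_left hl.ne'
  have hmid : midpoint ℝ v (v + l • g₁) = v + (l/2) • g₁ := by
    rw [midpoint_eq_smul_add, invOf_eq_inv]
    module
  have htu : t • u = (x - l/2) • g₁ + y • g₂ + z • g₃ := by
    rw [hmid] at hxyz
    have : t • u = (v + (l/2) • g₁ + t • u) - (v + (l/2) • g₁) := by abel
    rw [this, hxyz]
    module
  have h0 : x - l/2 = - (y * r + z * q) := by
    have := congrArg (fun w => ⟪g₁, w⟫) htu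
    simp only [inner_add_right, inner_smul_right, hperp', h11, hr, hq] at this
    linarith
  refine ⟨t⁻¹ * (y * c), t⁻¹ * (z * b), by positivity, by positivity, ?_⟩
  have : u = t⁻¹ • (t • u) := by rw [smul_smul, inv_mul_cancel₀ ht.ne', one_smul]
  rw [this, htu, h0, mul_smul _ (y * c), mul_smul _ (z * b), ← smul_add]
  congr 1
  rw [he, hf, smul_smul, smul_smul, mul_assoc, mul_assoc, mul_inv_cancel₀ hb0.ne',
    mul_inv_cancel₀ hc0.ne']
  module

/-! ### Edges at a vertex of a polytope -/

/-- Structure of a polytope `P` at a vertex `v`: there is a finite set `Q` of directions, lying on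
a common affine plane `φ = 1` missing the origin, each spanning an edge at `v`, such that `P` lies in
the cone with apex `v` over the convex hull of `Q`. Here `Q` is the set of vertices of a vertex
figure of `P` at `v`. -/
lemma exists_edge_directions {P : Set E3} {S : Set E3} (hS : S.Finite) (hP : P = convexHull ℝ S)
    {v : E3} (hv : v ∈ Set.extremePoints ℝ P) :
    ∃ (Q : Set E3) (l : E3 → ℝ) (φ : E3 →L[ℝ] ℝ), Q.Finite ∧
      (∀ q ∈ Q, φ q = 1 ∧ 0 < l q ∧ IsFaceOf3 P (segment ℝ v (v + l q • q))) ∧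
      ∀ x ∈ P, x = v ∨ ∃ t : ℝ, 0 < t ∧ ∃ y ∈ convexHull ℝ Q, x = v + t • y := by
  have hPc : Convex ℝ P := hP ▸ convex_convexHull ℝ S
  have hPk : IsCompact P := hP ▸ hS.isCompact_convexHull ℝ
  obtain ⟨V, hV⟩ : ∃ V, V = Set.extremePoints ℝ P := ⟨_, rfl⟩
  have hVf : V.Finite := hS.subset (by rw [hV, hP]; exact extremePoints_convexHull_subset)
  have hPV : P = convexHull ℝ V := by
    have := closure_convexHull_extremePoints hPk hPc
    rw [← hV, (hVf.isClosed_convexHull ℝ).closure_eq] at this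
    exact this.symm
  obtain ⟨W, hW⟩ : ∃ W, W = V \ {v} := ⟨_, rfl⟩
  have hWf : W.Finite := by rw [hW]; exact hVf.sdiff
  have hWP : W ⊆ P := fun w hw => by
    rw [hW, hV] at hw
    exact hw.1.1
  have hvW : v ∉ convexHull ℝ W := by
    intro h
    have h1 : Convex ℝ (P \ {v}) := (hPc.mem_extremePoints_iff_convex_sdiff.1 hv).2
    have h2 : convexHull ℝ W ⊆ P \ {v} := convexHull_min (fun w hw => ⟨hWP hw, by
      rw [hW] at hw
      exact hw.2⟩) h1
    exact (h2 h).2 rfl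
  -- A functional separating `v` from the other vertices; `C` below is the resulting vertex figure.
  obtain ⟨φ, u, hφu, hφ⟩ := geometric_hahn_banach_point_closed (convex_convexHull ℝ W)
    (hWf.isClosed_convexHull ℝ) hvW
  have hφW : ∀ w ∈ convexHull ℝ W, 0 < φ (w - v) := fun w hw => by
    have := hφ w hw
    rw [map_sub]
    linarith
  have hφW' : ∀ w ∈ W, 0 < φ (w - v) := fun w hw => hφW w (subset_convexHull ℝ W hw)
  let f : E3 → E3 := fun w => (φ (w - v))⁻¹ • (w - v)
  obtain ⟨C, hC⟩ : ∃ C, C = convexHull ℝ (f '' W) := ⟨_, rfl⟩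
  have hCc : Convex ℝ C := hC ▸ convex_convexHull ℝ _
  have hfWf : (f '' W).Finite := hWf.image f
  have hφC : ∀ y ∈ C, φ y = 1 := by
    intro y hy
    have h1 : C ⊆ {y | φ y = 1} := by
      rw [hC]
      refine convexHull_min ?_ ?_
      · rintro _ ⟨w, hw, rfl⟩
        have := hφW' w hw
        simp only [f, Set.mem_ofPred_eq, map_smul, smul_eq_mul]
        exact inv_mul_cancel₀ this.ne'
      · exact convex_hyperplane φ.toLinearMap.isLinear 1
    exact h1 hy
  have hExtC : Set.extremePoints ℝ C ⊆ f '' W := by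
    rw [hC]; exact extremePoints_convexHull_subset
  have hCE : convexHull ℝ (Set.extremePoints ℝ C) = C := by
    have h1 : IsCompact C := hC ▸ hfWf.isCompact_convexHull ℝ
    have := closure_convexHull_extremePoints h1 hCc
    rwa [((hfWf.subset hExtC).isClosed_convexHull ℝ).closure_eq] at this
  have key : ∀ x ∈ P, x = v ∨ ∃ t : ℝ, 0 < t ∧ ∃ y ∈ C, x = v + t • y := by
    have hconv : Convex ℝ {x : E3 | x = v ∨ ∃ t : ℝ, 0 < t ∧ ∃ y ∈ C, x = v + t • y} := by
      refine convex_iff_forall_pos.2 ?_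
      rintro x hx x' hx' a b ha hb hab
      have hv' : v = a • v + b • v := by rw [← add_smul, hab, one_smul]
      rcases hx with rfl | ⟨t, ht, y, hy, rfl⟩ <;> rcases hx' with rfl | ⟨t', ht', y', hy', rfl⟩
      · exact Or.inl hv'.symm
      · refine Or.inr ⟨b * t', by positivity, y', hy', ?_⟩
        rw [smul_add, ← add_assoc, ← hv', smul_smul]
      · refine Or.inr ⟨a * t, by positivity, y, hy, ?_⟩
        rw [smul_add, add_right_comm, ← hv', smul_smul]
      · have hp : 0 < a * t + b * t' := by positivity
        refine Or.inr ⟨a * t + b * t', hp, (a * t / (a * t + b * t')) • y +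
          (b * t' / (a * t + b * t')) • y', hCc hy hy' (by positivity) (by positivity)
          (by field_simp), ?_⟩
        rw [smul_add, smul_add, smul_add, smul_smul, smul_smul, smul_smul, smul_smul,
          mul_div_cancel₀ _ hp.ne', mul_div_cancel₀ _ hp.ne']
        nth_rewrite 3 [hv']
        abel
    intro x hx
    rw [hPV] at hx
    refine convexHull_min ?_ hconv hx
    intro w hw
    by_cases hwv : w = v
    · exact Or.inl hwv
    · have hwW : w ∈ W := by rw [hW]; exact ⟨hw, hwv⟩
      have := hφW' w hwW
      refine Or.inr ⟨φ (w - v), this, f w, hC ▸ subset_convexHull ℝ _ ⟨w, hwW, rfl⟩, ?_⟩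
      simp only [f]
      rw [smul_inv_smul₀ this.ne', add_sub_cancel]
  have hface : ∀ q ∈ Set.extremePoints ℝ C, ∃ l : ℝ, 0 < l ∧
      IsFaceOf3 P (segment ℝ v (v + l • q)) := by
    intro q hq
    obtain ⟨w, hw, hwq⟩ := hExtC hq
    have hl := hφW' w hw
    obtain ⟨l, hldef⟩ : ∃ l, l = φ (w - v) := ⟨_, rfl⟩
    rw [← hldef] at hl
    have hwl : v + l • q = w := by
      rw [← hwq]
      simp only [f]
      rw [← hldef, smul_inv_smul₀ hl.ne', add_sub_cancel]
    have hwE : w ∈ Set.extremePoints ℝ P := by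
      rw [hW, hV] at hw; exact hw.1
    refine ⟨l, hl, ⟨?_, ?_⟩, convex_segment _ _, ?_⟩
    · rw [hwl]
      exact hPc.segment_subset hv.1 hwE.1
    · rintro x hx y hy z hz ⟨a, b, ha, hb, hab, hxy⟩
      -- Extremality of `q` in `C` puts `x` on the ray from `v` along `q`.
      have hx1 : x = v ∨ ∃ s : ℝ, 0 < s ∧ x = v + s • q := by
        obtain ⟨θ, ⟨hθ0, hθ1⟩, rfl⟩ := (segment_eq_image' ℝ v (v + l • q)) ▸ hz
        have hv' : v = a • v + b • v := by rw [← add_smul, hab, one_smul]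
        rcases key x hx with rfl | ⟨s, hs, x', hx', rfl⟩
        · exact Or.inl rfl
        have hφq : φ q = 1 := hφC q hq.1
        rcases key y hy with rfl | ⟨t, ht, y', hy', rfl⟩
        · have h1 : (a * s) • x' = (θ * l) • q := by
            simp only [add_sub_cancel_left, smul_add, smul_smul] at hxy
            rw [add_right_comm, ← hv'] at hxy
            exact add_left_cancel hxy
          have h2 := congrArg φ h1
          simp only [map_smul, smul_eq_mul, hφC x' hx', hφq, mul_one] at h2
          rw [h2] at h1
          have h3 : x' = q := smul_right_injective E3 (h2 ▸ (mul_pos ha hs).ne') h1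
          exact Or.inr ⟨s, hs, by rw [h3]⟩
        · have h1 : (a * s) • x' + (b * t) • y' = (θ * l) • q := by
            simp only [add_sub_cancel_left, smul_add, smul_smul] at hxy
            have : a • v + (a * s) • x' + (b • v + (b * t) • y')
              = (a • v + b • v) + ((a * s) • x' + (b * t) • y') := by abel
            rw [this, ← hv'] at hxy
            exact add_left_cancel hxy
          have h2 := congrArg φ h1
          simp only [map_add, map_smul, smul_eq_mul, hφC x' hx', hφC y' hy', hφq, mul_one] at h2
          have hp : 0 < a * s + b * t := by positivity
          have h3 : x' = q := by
            refine hq.2 hx' hy' ⟨a * s / (a * s + b * t), b * t / (a * s + b * t), by positivity,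
              by positivity, by field_simp, ?_⟩
            rw [div_eq_inv_mul, div_eq_inv_mul, ← smul_smul, ← smul_smul _ (b * t), ← smul_add, h1,
              ← h2, inv_smul_smul₀ hp.ne']
          exact Or.inr ⟨s, hs, by rw [h3]⟩
      rcases hx1 with rfl | ⟨s, hs, rfl⟩
      · exact left_mem_segment ℝ _ _
      · -- Extremality of `w` in `P` keeps `x` from lying beyond `w`.
        have hsl : s ≤ l := by
          by_contra! hlt
          have h1 : v = w := by
            refine hwE.2 hv.1 hx ?_
            rw [openSegment_eq_image']
            refine ⟨l / s, ⟨by positivity, (div_lt_one hs).2 hlt⟩, ?_⟩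
            simp only [add_sub_cancel_left, smul_smul]
            rw [div_mul_cancel₀ _ hs.ne', hwl]
          rw [hW] at hw
          exact hw.2 h1.symm
        rw [segment_eq_image']
        refine ⟨s / l, ⟨by positivity, (div_le_one hl).2 hsl⟩, ?_⟩
        simp only [add_sub_cancel_left, smul_smul]
        rw [div_mul_cancel₀ _ hl.ne']
    · rw [← convexHull_pair]
      exact (Set.toFinite _).isClosed_convexHull ℝ
  choose! l hl using hface
  refine ⟨Set.extremePoints ℝ C, l, φ, hfWf.subset hExtC, fun q hq =>
    ⟨hφC q hq.1, hl q hq⟩, ?_⟩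
  rw [hCE]
  exact key

lemma finrank_direction_segment {a b : E3} (h : a ≠ b) :
    Module.finrank ℝ (affineSpan ℝ (segment ℝ a b)).direction = 1 := by
  rw [← convexHull_pair, affineSpan_convexHull, direction_affineSpan, vectorSpan_pair_rev,
    finrank_span_singleton]
  simpa [sub_eq_zero] using h.symm

/-- At a vertex `v` of a full-dimensional polytope lying on exactly three edges, the edges have
linearly independent unit directions `g 0, g 1, g 2`, and the polytope lies in the cone with apex
`v` that they generate. -/
lemma exists_three_edges {P : Set E3} {S : Set E3} (hS : S.Finite) (hP : P = convexHull ℝ S)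
    (hfull : (interior P).Nonempty) {v : E3} (hv : v ∈ Set.extremePoints ℝ P)
    (h3 : {F | IsEdgeOf3 P F ∧ v ∈ F}.ncard = 3) :
    ∃ (g : Fin 3 → E3) (l : Fin 3 → ℝ), (∀ i, ‖g i‖ = 1) ∧ LinearIndependent ℝ g ∧
      (∀ i, 0 < l i ∧ IsEdgeOf3 P (segment ℝ v (v + l i • g i))) ∧
      ∀ x ∈ P, ∃ a b c : ℝ, 0 ≤ a ∧ 0 ≤ b ∧ 0 ≤ c ∧ x = v + (a • g 0 + b • g 1 + c • g 2) := by
  obtain ⟨Q, l, φ, hQf, hQ, hPQ⟩ := exists_edge_directions hS hP hv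
  have hedge : ∀ q ∈ Q, IsEdgeOf3 P (segment ℝ v (v + l q • q)) := fun q hq => by
    obtain ⟨h1, h2, h3⟩ := hQ q hq
    refine ⟨h3, finrank_direction_segment ?_⟩
    intro h
    have h4 := congrArg φ h
    rw [map_add, map_smul, h1, smul_eq_mul] at h4
    linarith
  -- Distinct directions give distinct edges at `v`.
  have hle : Q.ncard ≤ 3 := by
    rw [← h3]
    refine Set.ncard_le_ncard_of_injOn (fun q => segment ℝ v (v + l q • q))
      (fun q hq => ⟨hedge q hq, left_mem_segment ℝ _ _⟩) ?_ (Set.finite_of_ncard_ne_zero (by omega))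
    intro q hq q' hq' heq
    obtain ⟨h1, h2, -⟩ := hQ q hq
    obtain ⟨h1', h2', -⟩ := hQ q' hq'
    have hm : v + l q • q ∈ segment ℝ v (v + l q' • q') := by
      have : segment ℝ v (v + l q • q) = segment ℝ v (v + l q' • q') := heq
      rw [← this]
      exact right_mem_segment ℝ _ _
    rw [segment_eq_image'] at hm
    obtain ⟨θ, -, hθ⟩ := hm
    simp only [add_sub_cancel_left] at hθ
    have h5 := add_left_cancel hθ
    rw [smul_smul] at h5
    have h6 := congrArg φ h5
    simp only [map_smul, h1, h1', smul_eq_mul, mul_one] at h6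
    rw [h6] at h5
    exact (smul_right_injective E3 h2.ne' h5).symm
  -- The cone over `Q` contains a translate of `P`, which has nonempty interior.
  have hspan : Submodule.span ℝ Q = ⊤ := by
    obtain ⟨x, hx⟩ := hfull
    refine Submodule.eq_top_of_nonempty_interior' _ ⟨x - v, ?_⟩
    have h1 : (fun y => y + v) ⁻¹' interior P ⊆ (Submodule.span ℝ Q : Set E3) := by
      intro y hy
      rcases hPQ _ (interior_subset hy) with h | ⟨t, -, z, hz, h⟩
      · have : y = 0 := by simpa using h
        rw [this]; exact Submodule.zero_mem _
      · have : y = t • z := by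
          rw [add_comm v] at h
          exact add_right_cancel h
        rw [this]
        exact Submodule.smul_mem _ _ ((convexHull_min Submodule.subset_span (Submodule.convex _) hz))
    refine interior_maximal h1 (isOpen_interior.preimage (by fun_prop)) ?_
    simpa using hx
  have hfr : Module.finrank ℝ E3 = 3 := by simp
  have hge : 3 ≤ Q.ncard := by
    have := finrank_span_finset_le_card (R := ℝ) hQf.toFinset
    rw [Set.finrank, hQf.coe_toFinset, hspan, finrank_top, hfr] at this
    rwa [Set.ncard_eq_toFinset_card Q hQf]
  obtain ⟨a, b, c, hab, hac, hbc, hQe⟩ := Set.ncard_eq_three.1 (le_antisymm hle hge)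
  let q : Fin 3 → E3 := ![a, b, c]
  have hqr : Set.range q = Q := by
    rw [hQe]
    ext x
    simp only [q, Matrix.range_cons, Matrix.range_empty, Set.union_empty, Set.mem_union,
      Set.mem_singleton_iff, Set.mem_insert_iff]
  have hqQ : ∀ i, q i ∈ Q := fun i => hqr ▸ Set.mem_range_self i
  have hlin : LinearIndependent ℝ q :=
    linearIndependent_of_top_le_span_of_card_eq_finrank (by rw [hqr, hspan]) (by simp)
  have hn : ∀ i, 0 < ‖q i‖ := fun i => norm_pos_iff.2 (hlin.ne_zero i)
  refine ⟨fun i => ‖q i‖⁻¹ • q i, fun i => l (q i) * ‖q i‖, fun i => ?_, ?_, fun i => ⟨?_, ?_⟩, ?_⟩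
  · rw [norm_smul, norm_inv, norm_norm, inv_mul_cancel₀ (hn i).ne']
  · exact hlin.units_smul (fun i => Units.mk0 _ (inv_ne_zero (hn i).ne'))
  · exact mul_pos (hQ _ (hqQ i)).2.1 (hn i)
  · rw [smul_smul, mul_assoc, mul_inv_cancel₀ (hn i).ne', mul_one]
    exact hedge _ (hqQ i)
  · have hcone : convexHull ℝ Q ⊆ {y : E3 | ∃ a b c : ℝ, 0 ≤ a ∧ 0 ≤ b ∧ 0 ≤ c ∧
        y = a • q 0 + b • q 1 + c • q 2} := by
      refine convexHull_min ?_ ?_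
      · rw [hQe]
        rintro y (rfl | rfl | rfl)
        · exact ⟨1, 0, 0, by simp, by simp, by simp, by simp [q]⟩
        · exact ⟨0, 1, 0, by simp, by simp, by simp, by simp [q]⟩
        · exact ⟨0, 0, 1, by simp, by simp, by simp, by simp [q]⟩
      · rintro _ ⟨a, b, c, ha, hb, hc, rfl⟩ _ ⟨a', b', c', ha', hb', hc', rfl⟩ s t hs ht -
        exact ⟨s * a + t * a', s * b + t * b', s * c + t * c', by positivity, by positivity,
          by positivity, by module⟩
    intro x hx
    rcases hPQ x hx with rfl | ⟨t, ht, y, hy, rfl⟩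
    · exact ⟨0, 0, 0, le_rfl, le_rfl, le_rfl, by simp⟩
    · obtain ⟨a, b, c, ha, hb, hc, rfl⟩ := hcone hy
      refine ⟨t * a * ‖q 0‖, t * b * ‖q 1‖, t * c * ‖q 2‖, by positivity, by positivity,
        by positivity, ?_⟩
      simp only [smul_smul]
      rw [mul_assoc _ ‖q 0‖, mul_assoc _ ‖q 1‖, mul_assoc _ ‖q 2‖, mul_inv_cancel₀ (hn 0).ne',
        mul_inv_cancel₀ (hn 1).ne', mul_inv_cancel₀ (hn 2).ne']
      module

/-! ### Gram determinants of edge directions -/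

/-- Gram data of three linearly independent unit vectors: their pairwise inner products are less
than one in absolute value, and their Gram determinant is positive. -/
lemma gram_pos {g₁ g₂ g₃ : E3} (h₁ : ‖g₁‖ = 1) (h₂ : ‖g₂‖ = 1) (h₃ : ‖g₃‖ = 1)
    (hlin : LinearIndependent ℝ ![g₁, g₂, g₃]) :
    |⟪g₂, g₃⟫| < 1 ∧ |⟪g₁, g₃⟫| < 1 ∧ |⟪g₁, g₂⟫| < 1 ∧
      0 < 1 + 2 * ⟪g₂, g₃⟫ * ⟪g₁, g₃⟫ * ⟪g₁, g₂⟫ - ⟪g₂, g₃⟫ ^ 2 - ⟪g₁, g₃⟫ ^ 2 - ⟪g₁, g₂⟫ ^ 2 := by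
  have hl : ∀ a b c : ℝ, a • g₁ + b • g₂ + c • g₃ = 0 → a = 0 ∧ b = 0 ∧ c = 0 := by
    intro a b c h
    have := Fintype.linearIndependent_iff.1 hlin ![a, b, c] (by simpa [Fin.sum_univ_three] using h)
    exact ⟨this 0, this 1, this 2⟩
  have hp : ∀ a b c : ℝ, (a ≠ 0 ∨ b ≠ 0 ∨ c ≠ 0) → 0 < a ^ 2 + b ^ 2 + c ^ 2 +
      2 * b * c * ⟪g₂, g₃⟫ + 2 * a * c * ⟪g₁, g₃⟫ + 2 * a * b * ⟪g₁, g₂⟫ := by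
    intro a b c h
    have hne : a • g₁ + b • g₂ + c • g₃ ≠ 0 := fun h0 => by
      obtain ⟨ha, hb, hc⟩ := hl a b c h0
      tauto
    have h0 : 0 < ‖a • g₁ + b • g₂ + c • g₃‖ ^ 2 := by positivity
    rw [← real_inner_self_eq_norm_sq] at h0
    simp only [inner_add_left, inner_add_right, inner_smul_left, inner_smul_right,
      real_inner_self_eq_norm_sq, h₁, h₂, h₃, real_inner_comm g₁, real_inner_comm g₂ g₃,
      conj_trivial] at h0
    linarith
  obtain ⟨p, hpd⟩ : ∃ p, p = ⟪g₂, g₃⟫ := ⟨_, rfl⟩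
  obtain ⟨q, hqd⟩ : ∃ q, q = ⟪g₁, g₃⟫ := ⟨_, rfl⟩
  obtain ⟨r, hrd⟩ : ∃ r, r = ⟪g₁, g₂⟫ := ⟨_, rfl⟩
  rw [← hpd, ← hqd, ← hrd] at hp ⊢
  have hr : |r| < 1 := abs_lt.2 ⟨by linarith [hp 1 1 0 (by simp)], by linarith [hp 1 (-1) 0 (by simp)]⟩
  have hr2 : 0 < 1 - r ^ 2 := by
    have := (sq_lt_one_iff_abs_lt_one r).2 hr
    linarith
  refine ⟨abs_lt.2 ⟨by linarith [hp 0 1 1 (by simp)], by linarith [hp 0 1 (-1) (by simp)]⟩,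
    abs_lt.2 ⟨by linarith [hp 1 0 1 (by simp)], by linarith [hp 1 0 (-1) (by simp)]⟩, hr, ?_⟩
  -- This is the squared norm of a multiple of the component of `g₃` orthogonal to `g₁` and `g₂`.
  have := hp (-(q - r * p)) (-(p - r * q)) (1 - r ^ 2) (Or.inr (Or.inr hr2.ne'))
  refine pos_of_mul_pos_right ?_ hr2.le
  linarith

/-! ### Normal cones of the vertices -/

/-- Some vertex of a polytope with `n` vertices has a normal cone that contains at least the
fraction `1 / n` of the unit ball, because the normal cones of the vertices cover the space. -/
lemma exists_large_normal_cone {P : Set E3} {S : Set E3} (hS : S.Finite)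
    (hP : P = convexHull ℝ S) (hne : (Set.extremePoints ℝ P).Nonempty) :
    ∃ v ∈ Set.extremePoints ℝ P, volume.real (Metric.closedBall (0 : E3) 1) ≤
      (Set.extremePoints ℝ P).ncard *
        volume.real {u : E3 | ‖u‖ ≤ 1 ∧ ∀ x ∈ P, ⟪x - v, u⟫ ≤ 0} := by
  have hPc : Convex ℝ P := hP ▸ convex_convexHull ℝ S
  have hPk : IsCompact P := hP ▸ hS.isCompact_convexHull ℝ
  obtain ⟨V, hV⟩ : ∃ V, V = Set.extremePoints ℝ P := ⟨_, rfl⟩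
  have hVf : V.Finite := hS.subset (by rw [hV, hP]; exact extremePoints_convexHull_subset)
  have hPV : P = convexHull ℝ V := by
    have := closure_convexHull_extremePoints hPk hPc
    rw [← hV, (hVf.isClosed_convexHull ℝ).closure_eq] at this
    exact this.symm
  rw [← hV, Set.ncard_eq_toFinset_card V hVf]
  let N : E3 → Set E3 := fun v => {u : E3 | ‖u‖ ≤ 1 ∧ ∀ x ∈ P, ⟪x - v, u⟫ ≤ 0}
  have hfin : ∀ A ⊆ Metric.closedBall (0 : E3) 1, volume A ≠ ⊤ := fun A hA =>
    ((measure_mono hA).trans_lt (isCompact_closedBall (0 : E3) 1).measure_lt_top).ne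
  have hcov : Metric.closedBall (0 : E3) 1 ⊆ ⋃ v ∈ hVf.toFinset, N v := by
    intro u hu
    obtain ⟨v, hv, hmax⟩ := Set.exists_max_image V (fun v => ⟪v, u⟫) hVf (hV ▸ hne)
    simp only [Set.mem_iUnion]
    refine ⟨v, hVf.mem_toFinset.2 hv, by simpa using hu, fun x hx => ?_⟩
    rw [inner_sub_left, sub_nonpos]
    rw [hPV] at hx
    have hconv : Convex ℝ {x : E3 | ⟪x, u⟫ ≤ ⟪v, u⟫} :=
      convex_halfSpace_le ⟨fun x y => inner_add_left x y u,
        fun c x => real_inner_smul_left x u c⟩ _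
    exact convexHull_min hmax hconv hx
  by_contra! hlt
  have hN : ∀ v, N v ⊆ Metric.closedBall (0 : E3) 1 := fun v u hu => by simpa using hu.1
  have h1 : volume.real (Metric.closedBall (0 : E3) 1) ≤
      ∑ v ∈ hVf.toFinset, volume.real (N v) :=
    (measureReal_mono hcov (hfin _ (by simpa using fun v _ => hN v))).trans
      (measureReal_biUnion_finset_le _ _)
  have h2 : ∑ v ∈ hVf.toFinset, (hVf.toFinset.card * volume.real (N v)) <
      ∑ v ∈ hVf.toFinset, volume.real (Metric.closedBall (0 : E3) 1) :=
    Finset.sum_lt_sum_of_nonempty (hVf.toFinset_nonempty.2 (hV ▸ hne))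
      fun v hv => hlt v (hVf.mem_toFinset.1 hv)
  rw [← Finset.mul_sum, Finset.sum_const, nsmul_eq_mul] at h2
  have h3 := mul_le_mul_of_nonneg_left h1 (Nat.cast_nonneg (α := ℝ) hVf.toFinset.card)
  linarith

/-! ### A vertex with a large normal cone has a small dihedral angle -/

/-- An angle exceeding `π - arctan 2` has cosine below `-1 / √5`. -/
lemma lt_of_lt_arccos {x : ℝ} (h : Real.pi - Real.arctan 2 < Real.arccos x) : x < -(1 / √5) := by
  by_contra! hx
  have h1 := Real.arccos_le_arccos hx
  have h2 : Real.arccos (-(1 / √5)) = Real.pi - Real.arctan 2 := by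
    have h3 : 1 / √5 = Real.cos (Real.arctan 2) := by
      rw [Real.cos_arctan]; norm_num
    rw [Real.arccos_neg, h3, Real.arccos_cos]
    · exact (Real.arctan_pos.2 (by norm_num)).le
    · linarith [Real.arctan_lt_pi_div_two 2, Real.pi_pos]
  linarith

/-- A simple convex polytope in `ℝ³` with exactly 20 vertices has an edge with dihedral
angle at most `π - arctan 2`, the dihedral angle of the regular dodecahedron. -/
theorem exists_edge_dihedralAngle_le_dodecahedron
    (P : Set (EuclideanSpace ℝ (Fin 3)))
    (hpoly : ∃ S : Set (EuclideanSpace ℝ (Fin 3)), S.Finite ∧ P = convexHull ℝ S)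
    (hfull : (interior P).Nonempty)
    (hsimple : IsSimple3 P)
    (hvert : (Set.extremePoints ℝ P).ncard = 20) :
    ∃ F a b, IsEdgeOf3 P F ∧ a ≠ b ∧ F = segment ℝ a b ∧
      dihedralAngle3 P a b ≤ ENNReal.ofReal (Real.pi - Real.arctan 2) := by
  obtain ⟨S, hS, hP⟩ := hpoly
  have hne : (Set.extremePoints ℝ P).Nonempty :=
    Set.nonempty_of_ncard_ne_zero (by rw [hvert]; norm_num)
  obtain ⟨v, hv, hvol⟩ := exists_large_normal_cone hS hP hne
  obtain ⟨g, l, hg, hlin, hedge, hcone⟩ := exists_three_edges hS hP hfull hv (hsimple v hv)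
  by_contra! hcon
  have hcon' : ∀ i, ENNReal.ofReal (Real.pi - Real.arctan 2) <
      dihedralAngle3 P v (v + l i • g i) := fun i =>
    hcon _ v _ (hedge i).2 (by simp [(hedge i).1.ne', hlin.ne_zero i]) rfl
  have hlin' : LinearIndependent ℝ ![g 0, g 1, g 2] := by
    convert hlin
    ext i : 1
    fin_cases i <;> rfl
  obtain ⟨hp, hq, hr, hG⟩ := gram_pos (hg 0) (hg 1) (hg 2) hlin'
  have hlt : ∀ {i : Fin 3} {x : ℝ}, dihedralAngle3 P v (v + l i • g i) ≤
      ENNReal.ofReal (Real.arccos x) → x < -(1 / √5) := fun {i x} h =>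
    lt_of_lt_arccos (ENNReal.ofReal_lt_ofReal_iff'.1 ((hcon' i).trans_le h)).1
  -- All three dihedral angles at `v` are too large, so its face angles add up to more than `9π / 5`.
  have hsum := arccos_sum_gt (k := 1 / √5) (by positivity)
    (by rw [div_pow, Real.sq_sqrt (by norm_num)]; norm_num) hp hq hr hG
    (hlt (dihedralAngle3_le (hedge 0).1 (hg 0) (hg 1) (hg 2) hcone rfl rfl rfl hq hr hG))
    (hlt (dihedralAngle3_le (hedge 1).1 (hg 1) (hg 0) (hg 2) (fun x hx => by
      obtain ⟨a, b, c, ha, hb, hc, h⟩ := hcone x hx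
      exact ⟨b, a, c, hb, ha, hc, by rw [h]; module⟩)
      rfl rfl (real_inner_comm _ _) hp hr (by linarith)))
    (hlt (dihedralAngle3_le (hedge 2).1 (hg 2) (hg 0) (hg 1) (fun x hx => by
      obtain ⟨a, b, c, ha, hb, hc, h⟩ := hcone x hx
      exact ⟨c, a, b, hc, ha, hb, by rw [h]; module⟩)
      rfl (real_inner_comm _ _) (real_inner_comm _ _) hp hq (by linarith)))
  have hle := cone_le (hg 0) (hg 1) (hg 2) hr hq hp
  -- The normal cone at `v` is contained in the polar cone of the three edge directions.
  have hsub : {u : E3 | ‖u‖ ≤ 1 ∧ ∀ x ∈ P, ⟪x - v, u⟫ ≤ 0} ⊆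
      {u : E3 | ‖u‖ ≤ 1 ∧ ⟪g 0, u⟫ ≤ 0 ∧ ⟪g 1, u⟫ ≤ 0 ∧ ⟪g 2, u⟫ ≤ 0} := by
    rintro u ⟨hu, h⟩
    have hi : ∀ i, ⟪g i, u⟫ ≤ 0 := fun i => by
      have h1 := h _ ((hedge i).2.1.1.subset (right_mem_segment ℝ _ _))
      rw [add_sub_cancel_left, real_inner_smul_left] at h1
      exact nonpos_of_mul_nonpos_right h1 (hedge i).1
    exact ⟨hu, hi 0, hi 1, hi 2⟩
  have hmono := measureReal_mono (μ := volume) hsub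
    ((measure_mono (fun u hu => by simpa using hu.1)).trans_lt
      (isCompact_closedBall (0 : E3) 1).measure_lt_top).ne
  have hball : 0 < volume.real (Metric.closedBall (0 : E3) 1) :=
    ENNReal.toReal_pos (Metric.measure_closedBall_pos _ _ one_pos).ne'
      (isCompact_closedBall (0 : E3) 1).measure_lt_top.ne
  -- The polar cone contains at least `1 / 20` of the ball, so the face angles add up to at most
  -- `9π / 5`.
  rw [hvert] at hvol
  push_cast at hvol
  have h1 := mul_le_mul_of_nonneg_right (hvol.trans (mul_le_mul_of_nonneg_left hmono
    (by norm_num : (0 : ℝ) ≤ 20))) (mul_pos four_pos Real.pi_pos).le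
  have h2 := mul_lt_mul_of_pos_left hsum hball
  linarith
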